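/- arXiv:1301.1442 — 2 statements merged into one kernel-verified Lean document; each statement's English description precedes it below -/
import Mathlib

section
/- Φ is injective on PSL(2,ℝ) with image SO⁺(2,1): for A, B ∈ SL(2,ℝ), Φ(A) = Φ(B) implies A = B or A = −B; and for every M ∈ M₃(ℝ) with MᵀJM = J, det M = 1 and M₃₃ > 0 (where J := diag(1,1,−1)) there exists A ∈ SL(2,ℝ) with Φ(A) = M. -/
open Matrix

/-- The map `Φ` from 2×2 real matrices to 3×3 real matrices, given on
`A = (a,b;c,d)` by the explicit formula of Kim. -/
noncomputable def Phi (A : Matrix (Fin 2) (Fin 2) ℝ) : Matrix (Fin 3) (Fin 3) ℝ :=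
  let a := A 0 0; let b := A 0 1; let c := A 1 0; let d := A 1 1
  !![a * d + b * c, a * c - b * d, a * c + b * d;
     a * b - c * d, (a ^ 2 - b ^ 2 - c ^ 2 + d ^ 2) / 2,
       (a ^ 2 + b ^ 2 - c ^ 2 - d ^ 2) / 2;
     a * b + c * d, (a ^ 2 - b ^ 2 + c ^ 2 - d ^ 2) / 2,
       (a ^ 2 + b ^ 2 + c ^ 2 + d ^ 2) / 2]

/-- The matrix `J = diag(1,1,-1)` of the Lorentz form `x₁² + x₂² - x₃²`. -/
def Jmat : Matrix (Fin 3) (Fin 3) ℝ := !![1, 0, 0; 0, 1, 0; 0, 0, -1]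

theorem exists_rank_one (Q : Fin 4 → Fin 4 → ℝ)
    (h : ∀ k i j, Q k i * Q k j = Q k k * Q i j)
    (ht : 0 < Q 0 0 + Q 1 1 + Q 2 2 + Q 3 3) :
    ∃ v : Fin 4 → ℝ, ∀ i j, v i * v j = Q i j := by
  have hk : ∃ k, 0 < Q k k := by
    by_contra! hc
    linarith [hc 0, hc 1, hc 2, hc 3]
  obtain ⟨k, hk⟩ := hk
  refine ⟨fun i => Q k i / Real.sqrt (Q k k), fun i j => ?_⟩
  have hs := Real.mul_self_sqrt hk.le
  rw [div_mul_div_comm, hs, h, mul_div_cancel_left₀ _ hk.ne']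

theorem rank_one_unique (v w : Fin 4 → ℝ) (h : ∀ i j, v i * v j = w i * w j) :
    v = w ∨ v = -w := by
  by_cases hv : ∃ k, v k ≠ 0
  · obtain ⟨k, hk⟩ := hv
    rcases mul_self_eq_mul_self_iff.1 (h k k) with e | e
    · left
      funext i
      apply mul_left_cancel₀ hk
      rw [h k i, e]
    · right
      funext i
      apply mul_left_cancel₀ hk
      rw [h k i, e]
      simp
  · push Not at hv
    left
    funext i
    have := h i i
    rw [hv i] at this ⊢
    symm
    simpa using this

theorem adj_relation (M : Matrix (Fin 3) (Fin 3) ℝ) (h : Mᵀ * Jmat * M = Jmat)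
    (hd : M.det = 1) : Mᵀ * Jmat = Jmat * M.adjugate := by
  calc Mᵀ * Jmat = (Mᵀ * Jmat * M) * M.adjugate := by
        rw [Matrix.mul_assoc _ M, Matrix.mul_adjugate, hd, one_smul, Matrix.mul_one]
    _ = Jmat * M.adjugate := by rw [h]

theorem right_relation (M : Matrix (Fin 3) (Fin 3) ℝ) (h : Mᵀ * Jmat * M = Jmat) :
    M * Jmat * Mᵀ = Jmat := by
  have hJ : Jmat * Jmat = 1 := by
    ext i j
    fin_cases i <;> fin_cases j <;> simp [Jmat, Matrix.mul_apply, Fin.sum_univ_three]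
  have h1 : (Jmat * Mᵀ * Jmat) * M = 1 := by
    rw [Matrix.mul_assoc, Matrix.mul_assoc, ← Matrix.mul_assoc Mᵀ, h, hJ]
  have h2 := mul_eq_one_comm.1 h1
  calc M * Jmat * Mᵀ = (M * (Jmat * Mᵀ * Jmat)) * Jmat := by
        simp only [Matrix.mul_assoc, hJ, Matrix.mul_one]
    _ = Jmat := by rw [h2, Matrix.one_mul]

set_option maxHeartbeats 4000000 in
/-- `Φ` is injective on `PSL(2,ℝ)` (i.e. `Φ(A) = Φ(B)` forces `A = ±B`) and its
image is exactly `SO⁺(2,1)`. -/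
theorem stmt9 :
    (∀ A B : Matrix (Fin 2) (Fin 2) ℝ, A.det = 1 → B.det = 1 →
      Phi A = Phi B → A = B ∨ A = -B) ∧
    (∀ M : Matrix (Fin 3) (Fin 3) ℝ, Mᵀ * Jmat * M = Jmat → M.det = 1 →
      0 < M 2 2 → ∃ A : Matrix (Fin 2) (Fin 2) ℝ, A.det = 1 ∧ Phi A = M) := by
  constructor
  · intro A B hA hB h
    have e := fun i j => congrFun (congrFun h i) j
    have e00 := e 0 0
    have e01 := e 0 1
    have e02 := e 0 2
    have e10 := e 1 0
    have e11 := e 1 1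
    have e12 := e 1 2
    have e20 := e 2 0
    have e21 := e 2 1
    have e22 := e 2 2
    clear e
    rw [Matrix.det_fin_two] at hA hB
    simp [Phi] at e00 e01 e02 e10 e11 e12 e20 e21 e22
    have key := rank_one_unique ![A 0 0, A 0 1, A 1 0, A 1 1] ![B 0 0, B 0 1, B 1 0, B 1 1] (by
      intro i j
      fin_cases i <;> fin_cases j <;> simp <;> linarith)
    rcases key with k | k
    · left
      have k0 := congrFun k 0
      have k1 := congrFun k 1
      have k2 := congrFun k 2
      have k3 := congrFun k 3
      simp at k0 k1 k2 k3
      ext i j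
      fin_cases i <;> fin_cases j <;> simp [*]
    · right
      have k0 := congrFun k 0
      have k1 := congrFun k 1
      have k2 := congrFun k 2
      have k3 := congrFun k 3
      simp at k0 k1 k2 k3
      ext i j
      fin_cases i <;> fin_cases j <;> simp [*]
  · intro M h hd hpos
    have h2 := right_relation M h
    have h3 := adj_relation M h hd
    rw [Matrix.adjugate_fin_three] at h3
    rw [← Matrix.ext_iff] at h h2 h3
    simp [Fin.forall_fin_succ, Jmat, Matrix.mul_apply, Fin.sum_univ_three] at h h2 h3
    obtain ⟨⟨a1, a2, a3⟩, ⟨a4, a5, a6⟩, a7, a8, a9⟩ := h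
    obtain ⟨⟨b1, b2, b3⟩, ⟨b4, b5, b6⟩, b7, b8, b9⟩ := h2
    obtain ⟨⟨c1, c2, c3⟩, ⟨c4, c5, c6⟩, c7, c8, c9⟩ := h3
    obtain ⟨v, hv⟩ := exists_rank_one
      ![![(M 1 1 + M 1 2 + M 2 1 + M 2 2) / 2, (M 1 0 + M 2 0) / 2,
          (M 0 1 + M 0 2) / 2, (M 0 0 + 1) / 2],
        ![(M 1 0 + M 2 0) / 2, (- M 1 1 + M 1 2 - M 2 1 + M 2 2) / 2,
          (M 0 0 - 1) / 2, (M 0 2 - M 0 1) / 2],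
        ![(M 0 1 + M 0 2) / 2, (M 0 0 - 1) / 2,
          (- M 1 1 - M 1 2 + M 2 1 + M 2 2) / 2, (M 2 0 - M 1 0) / 2],
        ![(M 0 0 + 1) / 2, (M 0 2 - M 0 1) / 2, (M 2 0 - M 1 0) / 2,
          (M 1 1 - M 1 2 - M 2 1 + M 2 2) / 2]]
      (by
        intro k i j
        fin_cases k <;> fin_cases i <;> fin_cases j <;> simp <;> linarith)
      (by simp; linarith)
    simp [Fin.forall_fin_succ] at hv
    obtain ⟨⟨p1, p2, p3, p4⟩, ⟨p5, p6, p7, p8⟩, ⟨p9, p10, p11, p12⟩, p13, p14, p15, p16⟩ := hv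
    refine ⟨!![v 0, v 1; v 2, v 3], ?_, ?_⟩
    · rw [Matrix.det_fin_two]
      simp
      linarith
    · ext i j
      fin_cases i <;> fin_cases j <;> simp [Phi] <;> linarith
end

section
/- The parametrization f of the hyperboloid is Φ-equivariant: for every A = (a,b;c,d) ∈ SL(2,ℝ) and every z ∈ ℂ with Im z > 0, one has cz + d ≠ 0, the Möbius image w := (az+b)/(cz+d) satisfies Im w > 0, and f(w) = Φ(A)·f(z) (matrix–vector multiplication in ℝ³). -/
open Matrix

/-- The parametrization `f(x+iy) = (x/y, (x²+y²-1)/(2y), (x²+y²+1)/(2y))` of the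
hyperboloid. -/
noncomputable def f (z : ℂ) : Fin 3 → ℝ :=
  ![z.re / z.im, (z.re ^ 2 + z.im ^ 2 - 1) / (2 * z.im),
    (z.re ^ 2 + z.im ^ 2 + 1) / (2 * z.im)]

/-- `f` is `Φ`-equivariant: for `A = (a,b;c,d) ∈ SL(2,ℝ)` and `z` in the upper
half-plane, `cz + d ≠ 0`, the Möbius image `(az+b)/(cz+d)` lies in the upper
half-plane, and `f((az+b)/(cz+d)) = Φ(A)·f(z)`. -/
theorem stmt10 (a b c d : ℝ) (h : a * d - b * c = 1) (z : ℂ) (hz : 0 < z.im) :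
    (c : ℂ) * z + d ≠ 0 ∧
    0 < (((a : ℂ) * z + b) / ((c : ℂ) * z + d)).im ∧
    f (((a : ℂ) * z + b) / ((c : ℂ) * z + d)) =
      (Phi !![a, b; c, d]).mulVec (f z) := by
  obtain ⟨x, y⟩ := z
  simp only at hz
  have hy : y ≠ 0 := hz.ne'
  have hN : 0 < (c * x + d) ^ 2 + (c * y) ^ 2 := by
    by_cases hc : c = 0
    · subst hc
      have hd : d ≠ 0 := by
        rintro rfl
        simp at h
      have : 0 < d ^ 2 := by positivity
      simpa using this
    · have : 0 < (c * y) ^ 2 := by positivity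
      positivity
  obtain ⟨N, hNdef⟩ : ∃ N, N = (c * x + d) ^ 2 + (c * y) ^ 2 := ⟨_, rfl⟩
  rw [← hNdef] at hN
  have hN0 : N ≠ 0 := hN.ne'
  have hns : Complex.normSq ((c : ℂ) * ⟨x, y⟩ + d) = N := by
    rw [hNdef]
    simp [Complex.normSq_apply]
    ring
  have hre : (((a : ℂ) * ⟨x, y⟩ + b) / ((c : ℂ) * ⟨x, y⟩ + d)).re
      = ((a * x + b) * (c * x + d) + a * c * y ^ 2) / N := by
    rw [Complex.div_re, hns]
    simp
    ring
  have him : (((a : ℂ) * ⟨x, y⟩ + b) / ((c : ℂ) * ⟨x, y⟩ + d)).im = y / N := by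
    rw [Complex.div_im, hns]
    simp
    rw [← sub_div]
    congr 1
    linear_combination y * h
  have hsq : (((a * x + b) * (c * x + d) + a * c * y ^ 2) / N) ^ 2 + (y / N) ^ 2
      = ((a * x + b) ^ 2 + (a * y) ^ 2) / N := by
    field_simp
    rw [hNdef]
    linear_combination (-(y ^ 2) * (a * d - b * c + 1)) * h
  refine ⟨?_, ?_, ?_⟩
  · intro h0
    rw [h0] at hns
    simp at hns
    exact hN0 hns.symm
  · rw [him]
    positivity
  · unfold f
    rw [hre, him, hsq]
    ext i
    fin_cases i
    · simp [Phi, Matrix.mulVec, dotProduct, Fin.sum_univ_three]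
      field_simp
      ring
    · simp [Phi, Matrix.mulVec, dotProduct, Fin.sum_univ_three]
      field_simp
      rw [hNdef]
      ring
    · simp [Phi, Matrix.mulVec, dotProduct, Fin.sum_univ_three]
      field_simp
      rw [hNdef]
      ring
end
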